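/- Let b > β > 0 and let f : 𝔻 → ℝ be defined by f(r·e^{iθ}) = (1/(r(1−r)^{b−β}))·sin(1/(1−r)^b) for 1/2 ≤ r < 1 and f(r·e^{iθ}) = 1 for 0 ≤ r < 1/2. Then there exist r₀ ∈ (0,1) and a constant C > 0 such that for every z = r·e^{iθ} ∈ 𝔻 with r ≥ r₀, the mean oscillation satisfies (1/|D(z,1)|)∫_{D(z,1)} |f(ξ) − f̂₁(z)| dA(ξ) ≥ C·(1−r)^{β−b}. In particular sup_{z∈𝔻} (1/|D(z,1)|)∫_{D(z,1)} |f − f̂₁(z)| dA = ∞, i.e. f does not belong to BMO¹. -/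

import Mathlib

open MeasureTheory Set

noncomputable section

/-- The normalized area measure on the plane: planar Lebesgue measure divided by `π`. -/
def dA : Measure ℂ := (ENNReal.ofReal Real.pi)⁻¹ • volume

/-- The open unit disc `𝔻`. -/
def unitDisc : Set ℂ := {z : ℂ | ‖z‖ < 1}

/-- The argument `θ` of `z`, normalized to lie in `[0, 2π)`. -/
def theta (z : ℂ) : ℝ := toIcoMod Real.two_pi_pos 0 (Complex.arg z)

/-- The angle of `ζ`, normalized to lie in `[theta z, theta z + 2π)`;
for `ζ ∈ B(z)` this is the angle `θ̃ ∈ [θ, θ + π(1-r)]` of the paper's convention. -/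
def angFrom (z ζ : ℂ) : ℝ := toIcoMod Real.two_pi_pos (theta z) (Complex.arg ζ)

/-- The polar rectangle `{ρ e^{iφ} : r₁ ≤ ρ ≤ r₂, φ₁ ≤ φ ≤ φ₂}`. -/
def polarRect (r₁ r₂ φ₁ φ₂ : ℝ) : Set ℂ :=
  {w : ℂ | ∃ ρ φ : ℝ, r₁ ≤ ρ ∧ ρ ≤ r₂ ∧ φ₁ ≤ φ ∧ φ ≤ φ₂ ∧
    w = (ρ : ℂ) * Complex.exp ((φ : ℂ) * Complex.I)}

/-- The set `B(z)` for `z = r e^{iθ} ∈ 𝔻`. -/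
def Bz (z : ℂ) : Set ℂ :=
  polarRect ‖z‖ (1 - (1 - ‖z‖) / 2) (theta z) (theta z + Real.pi * (1 - ‖z‖))

/-- The set `B(z, ζ)` for `ζ ∈ B(z)`. -/
def Bzz (z ζ : ℂ) : Set ℂ := polarRect ‖z‖ ‖ζ‖ (theta z) (angFrom z ζ)

/-- The set `B(ζ₁, ζ₂)` for points `ζ₁ ≾ ζ₂` of `B(z)`. -/
def Bsub (z ζ₁ ζ₂ : ℂ) : Set ℂ := polarRect ‖ζ₁‖ ‖ζ₂‖ (angFrom z ζ₁) (angFrom z ζ₂)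

/-- The relation `ζ₁ ≾ ζ₂` for points of `B(z)`: `ρ₁ ≤ ρ₂` and `φ₁ ≤ φ₂`. -/
def precSim (z ζ₁ ζ₂ : ℂ) : Prop := ‖ζ₁‖ ≤ ‖ζ₂‖ ∧ angFrom z ζ₁ ≤ angFrom z ζ₂

/-- The average `f̂_K = (1/|K|) ∫_K f dA` of `f` over a set `K`. -/
def avgOn (f : ℂ → ℂ) (K : Set ℂ) : ℂ := ((dA K).toReal)⁻¹ • ∫ w in K, f w ∂dA

/-- The average function `f̂(z) = f̂_{B(z)}`. -/
def avg (f : ℂ → ℂ) (z : ℂ) : ℂ := avgOn f (Bz z)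

/-- The quantity `(1/|B(z)|) |∫_{B(z,ζ)} (f(ξ) - f̂(z)) dA(ξ)|`. -/
def wQuot (f : ℂ → ℂ) (z ζ : ℂ) : ℝ :=
  ((dA (Bz z)).toReal)⁻¹ * ‖∫ ξ in Bzz z ζ, (f ξ - avg f z) ∂dA‖

/-- The BWMO condition: `‖f‖_BWMO < ∞`. -/
def IsBWMO (f : ℂ → ℂ) : Prop := ∃ C : ℝ, ∀ z ∈ unitDisc, ∀ ζ ∈ Bz z, wQuot f z ζ ≤ C

/-- The BWMO seminorm `‖f‖_BWMO`. -/
def bwmoNorm (f : ℂ → ℂ) : ℝ :=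
  sSup {c : ℝ | ∃ z ∈ unitDisc, ∃ ζ ∈ Bz z, c = wQuot f z ζ}

/-- The VWMO condition:
`(1/|B(z)|) sup_{ζ ∈ B(z)} |∫_{B(z,ζ)} (f - f̂(z)) dA| → 0` as `|z| → 1`. -/
def IsVWMO (f : ℂ → ℂ) : Prop :=
  ∀ ε > (0:ℝ), ∃ r₀ < (1:ℝ), ∀ z ∈ unitDisc, r₀ ≤ ‖z‖ → ∀ ζ ∈ Bz z, wQuot f z ζ ≤ ε

/-- The Bergman-metric disc `D(z,1)` of radius `1` centered at `z`. -/
def Dball (z : ℂ) : Set ℂ :=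
  {w : ℂ | ‖w‖ < 1 ∧ ‖(z - w) / (1 - (starRingEnd ℂ) w * z)‖ < Real.tanh 1}

/-- The hyperbolic average `f̂₁(z) = (1/|D(z,1)|) ∫_{D(z,1)} f dA` of a real-valued `f`. -/
def avg1 (f : ℂ → ℝ) (z : ℂ) : ℝ := ((dA (Dball z)).toReal)⁻¹ * ∫ w in Dball z, f w ∂dA

/-- The mean oscillation `(1/|D(z,1)|) ∫_{D(z,1)} |f - f̂₁(z)| dA` of a real-valued `f`. -/
def meanOsc1 (f : ℂ → ℝ) (z : ℂ) : ℝ :=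
  ((dA (Dball z)).toReal)⁻¹ * ∫ ξ in Dball z, |f ξ - avg1 f z| ∂dA

/-- The Berezin transform `f̃(z) = ∫_𝔻 f(w) |k_z(w)|² dA(w)`,
where `k_z(w) = (1-|z|²)/(1-w z̄)²`. -/
def berezin (f : ℂ → ℂ) (z : ℂ) : ℂ :=
  ∫ w in unitDisc, f w * ((((1 - ‖z‖ ^ 2) ^ 2 / ‖1 - w * (starRingEnd ℂ) z‖ ^ 4 : ℝ)) : ℂ) ∂dA

/-- The example symbol of Section 4:
`f(r e^{iθ}) = (1/(r (1-r)^{b-β})) sin(1/(1-r)^b)` for `r ≥ 1/2`, and `1` for `r < 1/2`. -/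
def fEx (b β : ℝ) (z : ℂ) : ℝ :=
  if ‖z‖ < 1 / 2 then 1
  else (1 / (‖z‖ * (1 - ‖z‖) ^ (b - β))) * Real.sin (1 / (1 - ‖z‖) ^ b)

end

/-!
Put `t = 1 - ‖z‖` and `c = avg1 f z`. The disc `D(z,1)` has area at most a constant times `t²` and
contains a polar rectangle `{1 - ‖w‖ ∈ [3t/4, t]}` of angular width `t/8`. There `f` has amplitude
comparable to `t^(β - b)`, while the phase `(1 - ‖w‖)^(-b)` runs through an interval of length
comparable to `t^(-b)`, hence through many periods. Choose a sign `σ` with `σ c ≤ 0`, so that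
`|f - c| ≥ max (σ f) 0`: whatever `c` is, one of the two half-waves is not cancelled, and it
contributes a fixed fraction of the amplitude times the area of the rectangle. Thus the mean
oscillation is at least a constant times `t^(β - b)`.
-/

open Filter Real Topology ComplexConjugate

section OscillatoryIntegrals

lemma abs_integral_le_mul_integral_comp {u u' h : ℝ → ℝ} {a b L : ℝ} (hab : a ≤ b)
    (hu : ∀ x ∈ Icc a b, HasDerivAt u (u' x) x) (hu' : ContinuousOn u' (Icc a b))
    (hL : ∀ x ∈ Icc a b, |u' x| ≤ L) (hh : Continuous h) (h0 : ∀ y, 0 ≤ h y) :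
    |∫ y in u a..u b, h y| ≤ L * ∫ x in a..b, h (u x) := by
  have hcont : ContinuousOn u (Icc a b) := fun x hx => (hu x hx).continuousAt.continuousWithinAt
  rw [← uIcc_of_le hab] at hu hu' hcont
  have hint : IntervalIntegrable (fun x => L * h (u x)) volume a b :=
    (continuousOn_const.mul (hh.comp_continuousOn hcont)).intervalIntegrable
  rw [← intervalIntegral.integral_comp_mul_deriv' hu hu' hh.continuousOn,
    ← intervalIntegral.integral_const_mul, ← norm_eq_abs]
  refine intervalIntegral.norm_integral_le_of_norm_le hab (.of_forall fun x hx => ?_) hint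
  rw [norm_mul, norm_eq_abs, norm_eq_abs, Function.comp_apply, abs_of_nonneg (h0 _), mul_comm]
  exact mul_le_mul_of_nonneg_right (hL x (Ioc_subset_Icc_self hx)) (h0 _)

-- Since `|σ sin y| ≤ 1`, the positive part dominates `(σ sin y + sin² y) / 2`, whose primitive is
-- explicit.
lemma sub_div_four_sub_le_integral_max_mul_sin {σ u v : ℝ} (hσ : |σ| = 1) (huv : u ≤ v) :
    (v - u) / 4 - 3 / 2 ≤ ∫ y in u..v, max (σ * sin y) 0 := by
  have hpoint (y : ℝ) : (σ * sin y + sin y ^ 2) / 2 ≤ max (σ * sin y) 0 := by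
    have hsq : sin y ^ 2 ≤ |σ * sin y| := by
      rw [abs_mul, hσ, one_mul, ← sq_abs]
      nlinarith [abs_nonneg (sin y), abs_sin_le_one y]
    cases abs_cases (σ * sin y) <;>
      linarith [le_max_left (σ * sin y) 0, le_max_right (σ * sin y) 0]
  have hσcos (y : ℝ) : |σ * cos y| ≤ 1 := by
    rw [abs_mul, hσ, one_mul]
    exact abs_cos_le_one y
  have hsincos (y : ℝ) : |sin y * cos y| ≤ 1 := by
    rw [abs_mul]
    exact mul_le_one₀ (abs_sin_le_one y) (abs_nonneg _) (abs_cos_le_one y)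
  calc (v - u) / 4 - 3 / 2
      ≤ (σ * (cos u - cos v) + (sin u * cos u - sin v * cos v + v - u) / 2) / 2 := by
        linarith [neg_le_of_abs_le (hσcos u), le_of_abs_le (hσcos v),
          neg_le_of_abs_le (hsincos u), le_of_abs_le (hsincos v)]
    _ = ∫ y in u..v, (σ * sin y + sin y ^ 2) / 2 := by
        rw [intervalIntegral.integral_div, intervalIntegral.integral_add
          (Continuous.intervalIntegrable (by fun_prop) _ _)
          (Continuous.intervalIntegrable (by fun_prop) _ _),
          intervalIntegral.integral_const_mul, integral_sin, integral_sin_sq]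
    _ ≤ ∫ y in u..v, max (σ * sin y) 0 :=
        intervalIntegral.integral_mono_on huv (Continuous.intervalIntegrable (by fun_prop) _ _)
          (Continuous.intervalIntegrable (by fun_prop) _ _) fun y _ => hpoint y

lemma rpow_neg_sub_le_integral_max_mul_sin_rpow_neg {b q t σ : ℝ} (hb : 0 < b) (hq : 0 < q)
    (hq1 : q ≤ 1) (ht : 0 < t) (hσ : |σ| = 1) :
    ((q * t) ^ (-b) - t ^ (-b)) / 4 - 3 / 2 ≤
      b * (q * t) ^ (-b - 1) * ∫ s in q * t..t, max (σ * sin (s ^ (-b))) 0 := by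
  have hqt : 0 < q * t := mul_pos hq ht
  have hqtt : q * t ≤ t := mul_le_of_le_one_left ht.le hq1
  have hpos {s : ℝ} (hs : s ∈ Icc (q * t) t) : 0 < s := hqt.trans_le hs.1
  have hderiv (s : ℝ) (hs : s ∈ Icc (q * t) t) : |-b * s ^ (-b - 1)| ≤ b * (q * t) ^ (-b - 1) := by
    rw [abs_mul, abs_neg, abs_of_pos hb, abs_of_pos (rpow_pos_of_pos (hpos hs) _)]
    gcongr ?_ * ?_
    exact rpow_le_rpow_of_nonpos hqt hs.1 (by linarith)
  calc ((q * t) ^ (-b) - t ^ (-b)) / 4 - 3 / 2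
      ≤ ∫ y in t ^ (-b)..(q * t) ^ (-b), max (σ * sin y) 0 :=
        sub_div_four_sub_le_integral_max_mul_sin hσ
          (rpow_le_rpow_of_nonpos hqt hqtt (by linarith))
    _ ≤ |∫ y in (q * t) ^ (-b)..t ^ (-b), max (σ * sin y) 0| := by
        rw [intervalIntegral.integral_symm]
        exact neg_le_abs _
    _ ≤ b * (q * t) ^ (-b - 1) * ∫ s in q * t..t, max (σ * sin (s ^ (-b))) 0 :=
        abs_integral_le_mul_integral_comp (h := fun y => max (σ * sin y) 0) hqtt
          (fun s hs => hasDerivAt_rpow_const (.inl (hpos hs).ne'))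
          (continuousOn_const.mul (continuousOn_id.rpow_const fun s hs => .inl (hpos hs).ne'))
          hderiv (by fun_prop) fun y => le_max_right _ _

lemma exists_mul_le_integral_max_mul_sin_rpow_neg {b q : ℝ} (hb : 0 < b) (hq : 0 < q)
    (hq1 : q < 1) :
    ∃ C > 0, ∀ᶠ t in 𝓝[>] (0 : ℝ), ∀ σ : ℝ, |σ| = 1 →
      C * t ≤ ∫ s in q * t..t, max (σ * sin (s ^ (-b))) 0 := by
  have hκ : 0 < q ^ (-b) - 1 :=
    sub_pos.2 (one_lt_rpow_of_pos_of_lt_one_of_neg hq hq1 (neg_lt_zero.2 hb))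
  set κ := q ^ (-b) - 1 with hκ_def
  refine ⟨κ / (8 * (b * q ^ (-b - 1))), by positivity, ?_⟩
  filter_upwards [self_mem_nhdsWithin,
    (tendsto_rpow_neg_nhdsGT_zero (neg_lt_zero.2 hb)).eventually_ge_atTop (12 / κ)]
    with t (ht : 0 < t) hlarge σ hσ
  have hmain := rpow_neg_sub_le_integral_max_mul_sin_rpow_neg hb hq hq1.le ht hσ
  set J := ∫ s in q * t..t, max (σ * sin (s ^ (-b))) 0
  have hκt : κ * t ^ (-b) / 8 ≤ b * q ^ (-b - 1) * (t ^ (-b) / t) * J := by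
    rw [mul_rpow hq.le ht.le, mul_rpow hq.le ht.le, rpow_sub_one ht.ne', ← mul_assoc] at hmain
    have : 12 ≤ κ * t ^ (-b) := (div_le_iff₀' hκ).1 hlarge
    have : κ * t ^ (-b) = q ^ (-b) * t ^ (-b) - t ^ (-b) := by rw [hκ_def]; ring
    linarith
  have : 0 < t ^ (-b) := by positivity
  calc κ / (8 * (b * q ^ (-b - 1))) * t
      = κ * t ^ (-b) / 8 / (b * q ^ (-b - 1) * (t ^ (-b) / t)) := by field_simp
    _ ≤ J := (div_le_iff₀' (by positivity)).2 hκt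

end OscillatoryIntegrals

section PolarRectangles

lemma polarCoord_symm_eq_mul_exp (p : ℝ × ℝ) :
    Complex.polarCoord.symm p = p.1 * Complex.exp (p.2 * Complex.I) := by
  rw [Complex.polarCoord_symm_apply, Complex.exp_mul_I, Complex.ofReal_cos, Complex.ofReal_sin]

lemma polarRect_eq_image (r₁ r₂ φ₁ φ₂ : ℝ) :
    polarRect r₁ r₂ φ₁ φ₂ = Complex.polarCoord.symm '' (Icc r₁ r₂ ×ˢ Icc φ₁ φ₂) := by
  ext w
  simp only [polarRect, Set.mem_ofPred_eq, mem_image, polarCoord_symm_eq_mul_exp, Prod.exists,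
    mem_prod, mem_Icc, and_assoc, eq_comm]

lemma isCompact_polarRect (r₁ r₂ φ₁ φ₂ : ℝ) : IsCompact (polarRect r₁ r₂ φ₁ φ₂) := by
  rw [polarRect_eq_image]
  refine (isCompact_Icc.prod isCompact_Icc).image ?_
  simp only [funext polarCoord_symm_eq_mul_exp]
  fun_prop

lemma norm_mem_Icc_of_mem_polarRect {r₁ r₂ φ₁ φ₂ : ℝ} (hr₁ : 0 ≤ r₁) {w : ℂ}
    (hw : w ∈ polarRect r₁ r₂ φ₁ φ₂) : ‖w‖ ∈ Icc r₁ r₂ := by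
  obtain ⟨ρ, φ, h₁, h₂, -, -, rfl⟩ := hw
  rw [norm_mul, Complex.norm_exp_ofReal_mul_I, mul_one, Complex.norm_of_nonneg (hr₁.trans h₁)]
  exact ⟨h₁, h₂⟩

lemma setIntegral_polarRect_comp_norm {r₁ r₂ φ₁ φ₂ : ℝ} (hr₁ : 0 < r₁) (hr : r₁ ≤ r₂)
    (hφ₁ : -π < φ₁) (hφ : φ₁ ≤ φ₂) (hφ₂ : φ₂ < π) (g : ℝ → ℝ) :
    ∫ w in polarRect r₁ r₂ φ₁ φ₂, g ‖w‖ = (φ₂ - φ₁) * ∫ x in r₁..r₂, x * g x := by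
  have hsub : Icc r₁ r₂ ×ˢ Icc φ₁ φ₂ ⊆ polarCoord.target := by
    rw [polarCoord_target]
    exact prod_mono (fun x hx => hr₁.trans_le hx.1) (Icc_subset_Ioo hφ₁ hφ₂)
  have hindicator (p : ℝ × ℝ) (hp : p ∈ polarCoord.target) :
      p.1 • (polarRect r₁ r₂ φ₁ φ₂).indicator (fun w => g ‖w‖) (Complex.polarCoord.symm p) =
        (Icc r₁ r₂ ×ˢ Icc φ₁ φ₂).indicator (fun p => p.1 * g p.1 * 1) p := by
    have hmem : Complex.polarCoord.symm p ∈ polarRect r₁ r₂ φ₁ φ₂ ↔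
        p ∈ Icc r₁ r₂ ×ˢ Icc φ₁ φ₂ := by
      rw [polarRect_eq_image]
      exact Complex.polarCoord.symm.injOn.mem_image_iff hsub hp
    have hnorm : ‖Complex.polarCoord.symm p‖ = p.1 := by
      rw [Complex.norm_polarCoord_symm, abs_of_pos hp.1]
    by_cases h : p ∈ Icc r₁ r₂ ×ˢ Icc φ₁ φ₂
    · rw [indicator_of_mem (hmem.2 h), indicator_of_mem h, hnorm, smul_eq_mul, mul_one]
    · rw [indicator_of_notMem (mt hmem.1 h), indicator_of_notMem h, smul_zero]
  calc ∫ w in polarRect r₁ r₂ φ₁ φ₂, g ‖w‖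
      = ∫ p in polarCoord.target, (Icc r₁ r₂ ×ˢ Icc φ₁ φ₂).indicator
          (fun p => p.1 * g p.1 * 1) p := by
        rw [← integral_indicator (isCompact_polarRect ..).measurableSet,
          ← Complex.integral_comp_polarCoord_symm]
        exact setIntegral_congr_fun polarCoord.open_target.measurableSet hindicator
    _ = ∫ p in Icc r₁ r₂ ×ˢ Icc φ₁ φ₂, p.1 * g p.1 * 1 := by
        rw [setIntegral_indicator (measurableSet_Icc.prod measurableSet_Icc),
          inter_eq_self_of_subset_right hsub]
    _ = (φ₂ - φ₁) * ∫ x in r₁..r₂, x * g x := by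
        rw [Measure.volume_eq_prod,
          setIntegral_prod_mul (fun x => x * g x) (fun _ => (1 : ℝ)), setIntegral_const,
          volume_real_Icc_of_le hφ, smul_eq_mul, mul_one, mul_comm, integral_Icc_eq_integral_Ioc,
          intervalIntegral.integral_of_le hr]

lemma norm_polar_sub_polar_le (ρ ρ' φ φ' : ℝ) :
    ‖ρ * Complex.exp (φ * Complex.I) - ρ' * Complex.exp (φ' * Complex.I)‖ ≤
      |ρ - ρ'| + |ρ| * |φ - φ'| := by
  have hsplit : ρ * Complex.exp (φ * Complex.I) - ρ' * Complex.exp (φ' * Complex.I) =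
      ((ρ - ρ' : ℝ) + ρ * (Complex.exp (Complex.I * (φ - φ' : ℝ)) - 1)) *
        Complex.exp (φ' * Complex.I) := by
    have : Complex.exp (φ * Complex.I) =
        Complex.exp (Complex.I * (φ - φ' : ℝ)) * Complex.exp (φ' * Complex.I) := by
      rw [← Complex.exp_add]
      push_cast
      ring_nf
    rw [this]
    push_cast
    ring
  rw [hsplit, norm_mul, Complex.norm_exp_ofReal_mul_I, mul_one]
  refine (norm_add_le _ _).trans ?_
  rw [norm_mul, Complex.norm_real, Complex.norm_real, norm_eq_abs, norm_eq_abs]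
  gcongr
  exact norm_exp_I_mul_ofReal_sub_one_le

end PolarRectangles

section BergmanDiscs

lemma half_lt_tanh_one : 1 / 2 < tanh 1 := by
  rw [tanh_eq, lt_div_iff₀ (by positivity)]
  linarith [exp_one_gt_d9, exp_neg_one_lt_d9]

lemma one_sub_norm_le_norm_one_sub_conj_mul {z w : ℂ} (hw : ‖w‖ ≤ 1) :
    1 - ‖z‖ ≤ ‖1 - conj w * z‖ := by
  have h := norm_sub_norm_le 1 (conj w * z)
  rw [norm_one, norm_mul, RCLike.norm_conj] at h
  linarith [mul_le_of_le_one_left (norm_nonneg z) hw]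

lemma norm_one_sub_conj_mul_le {z : ℂ} (w : ℂ) (hz : ‖z‖ ≤ 1) :
    ‖1 - conj w * z‖ ≤ 2 * (1 - ‖z‖) + ‖z - w‖ := by
  have hsplit : 1 - conj w * z = ((1 - ‖z‖ ^ 2 : ℝ) : ℂ) + conj (z - w) * z := by
    push_cast
    rw [← Complex.conj_mul' z, map_sub]
    ring
  have hz2 : ‖z‖ ^ 2 ≤ 1 := pow_le_one₀ (norm_nonneg z) hz
  rw [hsplit]
  refine (norm_add_le _ _).trans ?_
  rw [Complex.norm_of_nonneg (by linarith), norm_mul, RCLike.norm_conj]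
  have := mul_le_of_le_one_right (norm_nonneg (z - w)) hz
  nlinarith [sq_nonneg (1 - ‖z‖)]

lemma mem_Dball_iff {z w : ℂ} (hz : ‖z‖ < 1) :
    w ∈ Dball z ↔ ‖w‖ < 1 ∧ ‖z - w‖ < tanh 1 * ‖1 - conj w * z‖ := by
  refine and_congr_right fun hw => ?_
  have := one_sub_norm_le_norm_one_sub_conj_mul (z := z) hw.le
  rw [norm_div, div_lt_iff₀ (by linarith)]

lemma mem_Dball_comm {z w : ℂ} (hz : ‖z‖ < 1) (hw : ‖w‖ < 1) : w ∈ Dball z ↔ z ∈ Dball w := by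
  have : ‖1 - conj w * z‖ = ‖1 - conj z * w‖ := by
    rw [← RCLike.norm_conj]
    simp [mul_comm]
  rw [mem_Dball_iff hz, mem_Dball_iff hw, this, norm_sub_rev, and_iff_right hw, and_iff_right hz]

lemma ball_subset_Dball {z : ℂ} (hz : ‖z‖ < 1) :
    Metric.ball z (tanh 1 * (1 - ‖z‖)) ⊆ Dball z := by
  intro w hw
  rw [mem_ball_iff_norm'] at hw
  have htanh : 0 ≤ tanh 1 := by linarith [half_lt_tanh_one]
  have hw1 : ‖w‖ < 1 := by
    have := norm_sub_norm_le w z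
    rw [norm_sub_rev] at this
    nlinarith [tanh_lt_one 1]
  refine (mem_Dball_iff hz).2 ⟨hw1, hw.trans_le ?_⟩
  exact mul_le_mul_of_nonneg_left (one_sub_norm_le_norm_one_sub_conj_mul hw1.le) htanh

lemma one_sub_tanh_mul_norm_sub_le {z w : ℂ} (hz : ‖z‖ < 1) (hw : w ∈ Dball z) :
    (1 - tanh 1) * ‖z - w‖ ≤ 2 * tanh 1 * (1 - ‖z‖) := by
  have h := ((mem_Dball_iff hz).1 hw).2
  have := mul_le_mul_of_nonneg_left (norm_one_sub_conj_mul_le w hz.le)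
    (by linarith [half_lt_tanh_one] : 0 ≤ tanh 1)
  linarith

lemma Dball_subset_closedBall {z : ℂ} (hz : ‖z‖ < 1) :
    Dball z ⊆ Metric.closedBall z (2 * tanh 1 / (1 - tanh 1) * (1 - ‖z‖)) := fun w hw => by
  rw [mem_closedBall_iff_norm', div_mul_eq_mul_div, le_div_iff₀' (sub_pos.2 (tanh_lt_one 1))]
  exact one_sub_tanh_mul_norm_sub_le hz hw

lemma exists_Dball_subset_closedBall_zero {z : ℂ} (hz : ‖z‖ < 1) :
    ∃ R < 1, Dball z ⊆ Metric.closedBall 0 R := by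
  have htanh := tanh_lt_one 1
  have htanh0 := half_lt_tanh_one
  refine ⟨1 - (1 - tanh 1) * (1 - ‖z‖) / (1 + tanh 1),
    sub_lt_self _ (div_pos (by nlinarith) (by linarith)), fun w hw => ?_⟩
  have h := one_sub_tanh_mul_norm_sub_le hw.1 ((mem_Dball_comm hz hw.1).1 hw)
  rw [mem_closedBall_zero_iff, le_sub_comm, div_le_iff₀ (by linarith)]
  nlinarith [norm_sub_norm_le w z]

lemma volume_real_Dball_le {z : ℂ} (hz : ‖z‖ < 1) :
    volume.real (Dball z) ≤ π * (2 * tanh 1 / (1 - tanh 1)) ^ 2 * (1 - ‖z‖) ^ 2 := by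
  have hR : 0 ≤ 2 * tanh 1 / (1 - tanh 1) * (1 - ‖z‖) := by
    have := tanh_lt_one 1
    have := half_lt_tanh_one
    exact mul_nonneg (div_nonneg (by linarith) (by linarith)) (by linarith)
  refine (measureReal_mono (Dball_subset_closedBall hz)
    measure_closedBall_lt_top.ne).trans_eq ?_
  rw [measureReal_def, Complex.volume_closedBall, ENNReal.toReal_mul, ENNReal.toReal_pow,
    ENNReal.toReal_ofReal hR, ENNReal.coe_toReal, NNReal.coe_real_pi]
  ring

lemma volume_real_Dball_pos {z : ℂ} (hz : ‖z‖ < 1) : 0 < volume.real (Dball z) := by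
  have hr : 0 < tanh 1 * (1 - ‖z‖) :=
    mul_pos (by linarith [half_lt_tanh_one]) (by linarith)
  refine ENNReal.toReal_pos (((Metric.measure_ball_pos volume z hr).trans_le
    (measure_mono (ball_subset_Dball hz))).ne') ?_
  exact measure_ne_top_of_subset (Dball_subset_closedBall hz) measure_closedBall_lt_top.ne

lemma exists_Icc_subset_Ioo_neg_pi_pi {θ δ : ℝ} (hθ : θ ∈ Ioc (-π) π) (hδ0 : 0 < δ)
    (hδ : 2 * δ < π) :
    ∃ φ, -π < φ ∧ φ + δ < π ∧ ∀ ψ ∈ Icc φ (φ + δ), |θ - ψ| ≤ 2 * δ := by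
  rcases le_total θ 0 with h | h
  · refine ⟨θ, hθ.1, by linarith, fun ψ hψ => abs_le.2 ⟨?_, ?_⟩⟩ <;> linarith [hψ.1, hψ.2]
  · refine ⟨θ - 2 * δ, by linarith, by linarith [hθ.2], fun ψ hψ => abs_le.2 ⟨?_, ?_⟩⟩ <;>
      linarith [hψ.1, hψ.2]

lemma exists_polarRect_subset_Dball {z : ℂ} (hz : ‖z‖ < 1) :
    ∃ φ, -π < φ ∧ φ + (1 - ‖z‖) / 8 < π ∧
      polarRect ‖z‖ (1 - 3 / 4 * (1 - ‖z‖)) φ (φ + (1 - ‖z‖) / 8) ⊆ Dball z := by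
  obtain ⟨φ, hφ₁, hφ₂, hφ⟩ := exists_Icc_subset_Ioo_neg_pi_pi (θ := z.arg) (δ := (1 - ‖z‖) / 8)
    z.arg_mem_Ioc (by linarith) (by linarith [norm_nonneg z, pi_gt_three])
  refine ⟨φ, hφ₁, hφ₂, ?_⟩
  rintro _ ⟨ρ, ψ, hρ₁, hρ₂, hψ₁, hψ₂, rfl⟩
  apply ball_subset_Dball hz
  have hdist := norm_polar_sub_polar_le ‖z‖ ρ z.arg ψ
  rw [Complex.norm_mul_exp_arg_mul_I, abs_norm, abs_sub_comm, abs_of_nonneg (by linarith)] at hdist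
  have hangle := hφ ψ ⟨hψ₁, hψ₂⟩
  rw [mem_ball_iff_norm']
  nlinarith [half_lt_tanh_one, mul_le_of_le_one_left (abs_nonneg (z.arg - ψ)) hz.le]

end BergmanDiscs

lemma meanOsc1_eq_setAverage (f : ℂ → ℝ) (z : ℂ) :
    meanOsc1 f z = ⨍ ξ in Dball z, |f ξ - avg1 f z| := by
  have hπ : ((ENNReal.ofReal π)⁻¹).toReal ≠ 0 := by
    simp [ENNReal.toReal_inv, pi_pos.le, pi_ne_zero]
  rw [meanOsc1, setAverage_eq, dA, Measure.restrict_smul, integral_smul_measure,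
    ← measureReal_def, measureReal_ennreal_smul_apply, smul_eq_mul, smul_eq_mul]
  field_simp

lemma min_one_rpow_mul_rpow_le_rpow {q s t : ℝ} (hq : 0 < q) (ht : 0 < t)
    (hs : s ∈ Icc (q * t) t) (p : ℝ) : min 1 (q ^ p) * t ^ p ≤ s ^ p := by
  have : 0 ≤ t ^ p := rpow_nonneg ht.le p
  have hqt : 0 < q * t := mul_pos hq ht
  rcases le_total 0 p with hp | hp
  · calc min 1 (q ^ p) * t ^ p ≤ q ^ p * t ^ p := by gcongr; exact min_le_right _ _
      _ = (q * t) ^ p := (mul_rpow hq.le ht.le).symm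
      _ ≤ s ^ p := rpow_le_rpow hqt.le hs.1 hp
  · calc min 1 (q ^ p) * t ^ p ≤ 1 * t ^ p := by gcongr; exact min_le_left _ _
      _ ≤ s ^ p := by
        rw [one_mul]
        exact rpow_le_rpow_of_nonpos (hqt.trans_le hs.1) hs.2 hp

lemma exists_abs_eq_one_mul_nonpos (c : ℝ) : ∃ σ : ℝ, |σ| = 1 ∧ σ * c ≤ 0 := by
  rcases le_total c 0 with h | h
  · exact ⟨1, abs_one, by rwa [one_mul]⟩
  · exact ⟨-1, by rw [abs_neg, abs_one], by linarith⟩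

lemma mul_max_mul_le_abs_mul_sub {A c s σ : ℝ} (hA : 0 ≤ A) (hσ : |σ| = 1) (hc : σ * c ≤ 0) :
    A * max (σ * s) 0 ≤ |A * s - c| := by
  rw [mul_max_of_nonneg _ _ hA, mul_zero]
  refine max_le ?_ (abs_nonneg _)
  calc A * (σ * s) ≤ σ * (A * s - c) := by linarith
    _ ≤ |σ * (A * s - c)| := le_abs_self _
    _ = |A * s - c| := by rw [abs_mul, hσ, one_mul]

section ExampleSymbol

variable {b β : ℝ}

lemma fEx_of_half_le {z : ℂ} (hz : 1 / 2 ≤ ‖z‖) (hz1 : ‖z‖ ≤ 1) :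
    fEx b β z = ‖z‖⁻¹ * (1 - ‖z‖) ^ (β - b) * sin ((1 - ‖z‖) ^ (-b)) := by
  have hnonneg : 0 ≤ 1 - ‖z‖ := by linarith
  rw [fEx, if_neg hz.not_gt, one_div, one_div, mul_inv, ← rpow_neg hnonneg, ← rpow_neg hnonneg,
    neg_sub]

lemma integrableOn_fEx_closedBall {R : ℝ} (hR : R < 1) :
    IntegrableOn (fEx b β) (Metric.closedBall 0 R) := by
  set S := Metric.closedBall (0 : ℂ) R \ Metric.ball 0 (1 / 2)
  have hS : IsCompact S := (isCompact_closedBall 0 R).diff Metric.isOpen_ball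
  have hnorm {w : ℂ} (hw : w ∈ S) : 1 / 2 ≤ ‖w‖ ∧ ‖w‖ < 1 :=
    ⟨by simpa using hw.2, (mem_closedBall_zero_iff.1 hw.1).trans_lt hR⟩
  have hformula : ContinuousOn
      (fun w : ℂ => ‖w‖⁻¹ * (1 - ‖w‖) ^ (β - b) * sin ((1 - ‖w‖) ^ (-b))) S := by
    have hrpow (p : ℝ) : ContinuousOn (fun w : ℂ => (1 - ‖w‖) ^ p) S :=
      ContinuousOn.rpow_const (by fun_prop) fun w hw => .inl (by linarith [(hnorm hw).2])
    have hinv : ContinuousOn (fun w : ℂ => ‖w‖⁻¹) S :=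
      continuous_norm.continuousOn.inv₀ fun w hw => by linarith [(hnorm hw).1]
    exact (hinv.mul (hrpow _)).mul (continuous_sin.comp_continuousOn (hrpow _))
  have hannulus : IntegrableOn (fEx b β) S := (hformula.integrableOn_compact hS).congr_fun
    (fun w hw => (fEx_of_half_le (hnorm hw).1 (hnorm hw).2.le).symm) hS.measurableSet
  have hcore : IntegrableOn (fEx b β) (Metric.ball 0 (1 / 2)) :=
    (integrableOn_const measure_ball_lt_top.ne).congr_fun
      (fun w hw => (if_pos (mem_ball_zero_iff.1 hw)).symm) measurableSet_ball
  exact (hannulus.union hcore).mono_set (subset_sdiff_union _ _)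

lemma integrableOn_fEx_Dball {z : ℂ} (hz : ‖z‖ < 1) : IntegrableOn (fEx b β) (Dball z) := by
  obtain ⟨R, hR, hsub⟩ := exists_Dball_subset_closedBall_zero hz
  exact (integrableOn_fEx_closedBall hR).mono_set hsub

-- The factor `1 / ‖w‖` of `fEx` is kept on the left: it cancels the Jacobian of polar coordinates.
lemma inv_norm_mul_le_abs_fEx_sub {c σ t : ℝ} {w : ℂ} (hσ : |σ| = 1) (hc : σ * c ≤ 0)
    (hw : 1 / 2 ≤ ‖w‖) (ht : 0 < t) (hwt : 1 - ‖w‖ ∈ Icc (3 / 4 * t) t) :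
    ‖w‖⁻¹ * (min 1 ((3 / 4) ^ (β - b)) * t ^ (β - b) * max (σ * sin ((1 - ‖w‖) ^ (-b))) 0) ≤
      |fEx b β w - c| := by
  have hw1 : 0 < 1 - ‖w‖ := by linarith [hwt.1]
  have hamplitude := min_one_rpow_mul_rpow_le_rpow (by norm_num) ht hwt (β - b)
  calc ‖w‖⁻¹ * (min 1 ((3 / 4) ^ (β - b)) * t ^ (β - b) * max (σ * sin ((1 - ‖w‖) ^ (-b))) 0)
      ≤ ‖w‖⁻¹ * ((1 - ‖w‖) ^ (β - b) * max (σ * sin ((1 - ‖w‖) ^ (-b))) 0) := by gcongr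
    _ = ‖w‖⁻¹ * (1 - ‖w‖) ^ (β - b) * max (σ * sin ((1 - ‖w‖) ^ (-b))) 0 := (mul_assoc ..).symm
    _ ≤ |fEx b β w - c| := by
      rw [fEx_of_half_le hw (by linarith)]
      exact mul_max_mul_le_abs_mul_sub (by positivity) hσ hc

lemma mul_integral_le_setIntegral_abs_fEx_sub {c σ : ℝ} {z : ℂ} (hσ : |σ| = 1) (hc : σ * c ≤ 0)
    (hz : 1 / 2 ≤ ‖z‖) (hz1 : ‖z‖ < 1) :
    (1 - ‖z‖) / 8 * (min 1 ((3 / 4) ^ (β - b)) * (1 - ‖z‖) ^ (β - b) *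
        ∫ s in 3 / 4 * (1 - ‖z‖)..1 - ‖z‖, max (σ * sin (s ^ (-b))) 0) ≤
      ∫ w in Dball z, |fEx b β w - c| := by
  obtain ⟨φ, hφ₁, hφ₂, hsub⟩ := exists_polarRect_subset_Dball hz1
  set t := 1 - ‖z‖
  set S := polarRect ‖z‖ (1 - 3 / 4 * t) φ (φ + t / 8)
  set m := min 1 ((3 / 4) ^ (β - b)) * t ^ (β - b)
  let h : ℝ → ℝ := fun s => max (σ * sin (s ^ (-b))) 0
  have ht0 : 0 < t := sub_pos.2 hz1
  have : 0 ≤ m := by positivity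
  have hint : IntegrableOn (fun w => |fEx b β w - c|) (Dball z) :=
    ((integrableOn_fEx_Dball hz1).sub (integrableOn_const
      (measure_ne_top_of_subset (Dball_subset_closedBall hz1) measure_closedBall_lt_top.ne))).abs
  have hpoint (w : ℂ) (hw : w ∈ S) : ‖w‖⁻¹ * (m * h (1 - ‖w‖)) ≤ |fEx b β w - c| := by
    obtain ⟨h₁, h₂⟩ := norm_mem_Icc_of_mem_polarRect (norm_nonneg z) hw
    exact inv_norm_mul_le_abs_fEx_sub hσ hc (hz.trans h₁) ht0 ⟨by linarith, by linarith⟩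
  have hradial : ∫ x in ‖z‖..1 - 3 / 4 * t, x * (x⁻¹ * (m * h (1 - x))) =
      m * ∫ s in 3 / 4 * t..t, h s := by
    have hcancel : EqOn (fun x => x * (x⁻¹ * (m * h (1 - x)))) (fun x => m * h (1 - x))
        (uIcc ‖z‖ (1 - 3 / 4 * t)) := fun x hx => by
      rw [uIcc_of_le (by linarith)] at hx
      exact mul_inv_cancel_left₀ (by linarith [hx.1]) _
    rw [intervalIntegral.integral_congr hcancel, intervalIntegral.integral_const_mul,
      intervalIntegral.integral_comp_sub_left, sub_sub_cancel]
  calc t / 8 * (m * ∫ s in 3 / 4 * t..t, h s)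
      = ∫ w in S, ‖w‖⁻¹ * (m * h (1 - ‖w‖)) := by
        rw [setIntegral_polarRect_comp_norm (by linarith) (by linarith) hφ₁ (by linarith) hφ₂
          (fun x => x⁻¹ * (m * h (1 - x))), hradial, add_sub_cancel_left]
    _ ≤ ∫ w in S, |fEx b β w - c| :=
        integral_mono_of_nonneg (.of_forall fun w => by positivity) (hint.mono_set hsub)
          ((ae_restrict_iff' (isCompact_polarRect ..).measurableSet).2 (.of_forall hpoint))
    _ ≤ ∫ w in Dball z, |fEx b β w - c| :=
        setIntegral_mono_set hint (.of_forall fun w => abs_nonneg _) hsub.eventuallyLE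

lemma exists_mul_rpow_le_meanOsc1_fEx (hb : 0 < b) (β : ℝ) :
    ∃ r₀ ∈ Ioo (0 : ℝ) 1, ∃ C > (0 : ℝ), ∀ z : ℂ, r₀ ≤ ‖z‖ → ‖z‖ < 1 →
      C * (1 - ‖z‖) ^ (β - b) ≤ meanOsc1 (fEx b β) z := by
  obtain ⟨C, hC, hosc⟩ :=
    exists_mul_le_integral_max_mul_sin_rpow_neg hb (q := 3 / 4) (by norm_num) (by norm_num)
  obtain ⟨δ, hδ, hδosc⟩ := mem_nhdsGT_iff_exists_Ioc_subset.1 hosc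
  set K := 2 * tanh 1 / (1 - tanh 1)
  have hK : 0 < K := div_pos (by linarith [half_lt_tanh_one]) (sub_pos.2 (tanh_lt_one 1))
  have hr₀ : 0 < min (1 / 2) δ := lt_min (by norm_num) hδ
  have hr₀' : min (1 / 2) δ ≤ 1 / 2 := min_le_left _ _
  refine ⟨1 - min (1 / 2) δ, ⟨by linarith, by linarith⟩,
    min 1 ((3 / 4) ^ (β - b)) * C / (8 * (π * K ^ 2)), by positivity, fun z hz hz1 => ?_⟩
  obtain ⟨σ, hσ, hc⟩ := exists_abs_eq_one_mul_nonpos (avg1 (fEx b β) z)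
  have hlower := mul_integral_le_setIntegral_abs_fEx_sub (b := b) (β := β) hσ hc (by linarith) hz1
  have hvol := volume_real_Dball_le hz1
  have hvol0 := volume_real_Dball_pos hz1
  set t := 1 - ‖z‖
  have ht : 0 < t := sub_pos.2 hz1
  have hsin := hδosc ⟨ht, by linarith [min_le_right (1 / 2) δ]⟩ σ hσ
  rw [meanOsc1_eq_setAverage, setAverage_eq, smul_eq_mul]
  calc min 1 ((3 / 4) ^ (β - b)) * C / (8 * (π * K ^ 2)) * t ^ (β - b)
      = (π * K ^ 2 * t ^ 2)⁻¹ *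
          (t / 8 * (min 1 ((3 / 4) ^ (β - b)) * t ^ (β - b) * (C * t))) := by field_simp
    _ ≤ (volume.real (Dball z))⁻¹ * (t / 8 * (min 1 ((3 / 4) ^ (β - b)) * t ^ (β - b) *
          ∫ s in 3 / 4 * t..t, max (σ * sin (s ^ (-b))) 0)) := by gcongr
    _ ≤ (volume.real (Dball z))⁻¹ * ∫ w in Dball z, |fEx b β w - avg1 (fEx b β) z| := by gcongr

end ExampleSymbol

lemma not_exists_forall_mem_unitDisc_le {F : ℂ → ℝ} {C p r₀ : ℝ} (hC : 0 < C) (hp : p < 0)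
    (hr₀ : r₀ < 1) (hF : ∀ z : ℂ, r₀ ≤ ‖z‖ → ‖z‖ < 1 → C * (1 - ‖z‖) ^ p ≤ F z) :
    ¬ ∃ M : ℝ, ∀ z ∈ unitDisc, F z ≤ M := by
  rintro ⟨M, hM⟩
  have hlarge := (tendsto_rpow_neg_nhdsGT_zero hp).eventually_gt_atTop (M / C)
  have hsmall : ∀ᶠ t in 𝓝[>] (0 : ℝ), t ∈ Ioo 0 (min 1 (1 - r₀)) :=
    Ioo_mem_nhdsGT (lt_min one_pos (sub_pos.2 hr₀))
  obtain ⟨t, htM, ht0, ht⟩ := (hlarge.and hsmall).exists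
  obtain ⟨ht1, htr₀⟩ := lt_min_iff.1 ht
  have hnorm : ‖((1 - t : ℝ) : ℂ)‖ = 1 - t := Complex.norm_of_nonneg (by linarith)
  have hlt : ‖((1 - t : ℝ) : ℂ)‖ < 1 := by linarith
  have hlower := hF _ (by linarith) hlt
  rw [hnorm, sub_sub_cancel] at hlower
  linarith [hM _ hlt, (div_lt_iff₀' hC).1 htM]

theorem example_not_bmo_general {b : ℝ} (hb : 0 < b) (β : ℝ) :
    (∃ r₀ ∈ Ioo (0 : ℝ) 1, ∃ C > (0 : ℝ), ∀ z : ℂ, r₀ ≤ ‖z‖ → ‖z‖ < 1 →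
      C * (1 - ‖z‖) ^ (β - b) ≤ meanOsc1 (fEx b β) z) ∧
    (β < b → ¬ ∃ M : ℝ, ∀ z ∈ unitDisc, meanOsc1 (fEx b β) z ≤ M) := by
  obtain ⟨r₀, hr₀, C, hC, hosc⟩ := exists_mul_rpow_le_meanOsc1_fEx hb β
  exact ⟨⟨r₀, hr₀, C, hC, hosc⟩, fun hβb =>
    not_exists_forall_mem_unitDisc_le hC (sub_neg.2 hβb) hr₀.2 hosc⟩

/-- For `b > β > 0` and the example symbol `f = fEx b β`, there exist
`r₀ ∈ (0,1)` and `C > 0` with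
`(1/|D(z,1)|) ∫_{D(z,1)} |f(ξ) - f̂₁(z)| dA(ξ) ≥ C (1-r)^{β-b}` for all `|z| = r ≥ r₀`;
in particular the mean oscillation is unbounded, i.e. `f ∉ BMO¹`. -/
theorem example_not_bmo (b β : ℝ) (hβ : 0 < β) (hbβ : β < b) :
    (∃ r₀ ∈ Set.Ioo (0:ℝ) 1, ∃ C > (0:ℝ), ∀ z : ℂ, r₀ ≤ ‖z‖ → ‖z‖ < 1 →
      C * (1 - ‖z‖) ^ (β - b) ≤ meanOsc1 (fEx b β) z) ∧
    ¬ ∃ M : ℝ, ∀ z ∈ unitDisc, meanOsc1 (fEx b β) z ≤ M :=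
  (example_not_bmo_general (hβ.trans hbβ) β).imp_right fun h => h hbβ
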